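/- Let (T°, T⋆) be a latin bitrade. For each r ∈ {1,2,3} let β_r : T⋆ → T° be the bijection such that (a₁,a₂,a₃)β_r = (b₁,b₂,b₃) implies a_r ≠ b_r and a_i = b_i for i ≠ r (these maps exist and are well defined by conditions (R2) and (R3)). Define permutations of the set T° by τ₁ = β₂⁻¹β₃, τ₂ = β₃⁻¹β₁, τ₃ = β₁⁻¹β₂ (composing left to right). Then: (Q1) for all r < s in {1,2,3}, every cycle ρ of τ_r and every cycle μ of τ_s satisfy |mov(ρ) ∩ mov(μ)| ≤ 1; (Q2) each τ_i has no fixed points; and (Q3) τ₁τ₂τ₃ is the identity permutation of T°. -/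

import Mathlib

/-!
Each `β_r` changes only the `r`-th coordinate, so `τ_r`, built from the two other maps, preserves
the `r`-th coordinate, which is therefore constant on every cycle of `τ_r`. Two points common to
a cycle of `τ_r` and a cycle of `τ_s` thus agree in the coordinates `r` and `s`, and the partial
latin square condition makes them equal (`cyclesMeetPairwise_of_invariants`); this is (Q1). For
(Q2), a fixed point of `β_i⁻¹β_j` would be a common value `β_i t = β_j t`, but `β_i` changes the
`i`-th coordinate of `t` while `β_j` keeps it. (Q3) is cancellation of the `β_r`.
-/

section LatinDefs

variable {A₁ A₂ A₃ : Type*}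

/-- A partial latin square (finite version): two triples agreeing in at least two
coordinates are equal. -/
def IsPLS (T : Finset (A₁ × A₂ × A₃)) : Prop :=
  ∀ t ∈ T, ∀ t' ∈ T,
    ((t.1 = t'.1 ∧ t.2.1 = t'.2.1) → t = t') ∧
    ((t.1 = t'.1 ∧ t.2.2 = t'.2.2) → t = t') ∧
    ((t.2.1 = t'.2.1 ∧ t.2.2 = t'.2.2) → t = t')

/-- Conditions (R2)/(R3). -/
def BitradeCond (T T' : Finset (A₁ × A₂ × A₃)) : Prop :=
  ∀ t ∈ T,
    (∃! t', t' ∈ T' ∧ t'.1 = t.1 ∧ t'.2.1 = t.2.1) ∧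
    (∃! t', t' ∈ T' ∧ t'.1 = t.1 ∧ t'.2.2 = t.2.2) ∧
    (∃! t', t' ∈ T' ∧ t'.2.1 = t.2.1 ∧ t'.2.2 = t.2.2)

/-- A latin bitrade (finite version). -/
def IsBitrade (T T' : Finset (A₁ × A₂ × A₃)) : Prop :=
  T.Nonempty ∧ T'.Nonempty ∧ IsPLS T ∧ IsPLS T' ∧ Disjoint T T' ∧
  BitradeCond T T' ∧ BitradeCond T' T

end LatinDefs

/-- Condition (Q1) for a pair of permutations: any cycle of the first and any cycle of
the second move at most one common point. -/
def CyclesMeetPairwise {X : Type*} [Fintype X] [DecidableEq X] (σ τ : Equiv.Perm X) : Prop :=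
  ∀ ρ ∈ σ.cycleFactorsFinset, ∀ μ ∈ τ.cycleFactorsFinset,
    (ρ.support ∩ μ.support).card ≤ 1

/-- A function invariant under `σ` is constant on the support of each cycle of `σ`. -/
lemma eq_on_cycle_support {X B : Type*} [Fintype X] [DecidableEq X] {σ ρ : Equiv.Perm X}
    (f : X → B) (hf : ∀ x, f (σ x) = f x) (hρ : ρ ∈ σ.cycleFactorsFinset) {x y : X}
    (hx : x ∈ ρ.support) (hy : y ∈ ρ.support) : f x = f y := by
  obtain ⟨hcyc, hval⟩ := Equiv.Perm.mem_cycleFactorsFinset_iff.1 hρ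
  have hstep : ∀ z, f (ρ z) = f z := by
    intro z
    by_cases hz : z ∈ ρ.support
    · rw [hval z hz, hf]
    · rw [Equiv.Perm.notMem_support.1 hz]
  have hpow : ∀ (n : ℕ) (z : X), f ((ρ ^ n) z) = f z := by
    intro n
    induction n with
    | zero => simp
    | succ n ih => intro z; rw [pow_succ, Equiv.Perm.mul_apply, ih, hstep]
  obtain ⟨n, hn⟩ := hcyc.exists_pow_eq (Equiv.Perm.mem_support.1 hx) (Equiv.Perm.mem_support.1 hy)
  rw [← hn, hpow]

/-- If `f` is invariant under `σ`, `g` is invariant under `τ`, and `f`, `g` jointly separate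
points, then a cycle of `σ` and a cycle of `τ` share at most one moved point. -/
lemma cyclesMeetPairwise_of_invariants {X B C : Type*} [Fintype X] [DecidableEq X]
    {σ τ : Equiv.Perm X} (f : X → B) (g : X → C) (hf : ∀ x, f (σ x) = f x)
    (hg : ∀ x, g (τ x) = g x) (hfg : ∀ x y, f x = f y → g x = g y → x = y) :
    CyclesMeetPairwise σ τ := by
  intro ρ hρ μ hμ
  refine Finset.card_le_one.2 fun x hx y hy => ?_
  rw [Finset.mem_inter] at hx hy
  exact hfg x y (eq_on_cycle_support f hf hρ hx.1 hy.1) (eq_on_cycle_support g hg hμ hx.2 hy.2)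

/-- Lemma: given a latin bitrade `(T°, T⋆)` and the bijections `β_r : T⋆ → T°` changing
only the `r`-th coordinate, the permutations `τ₁ = β₂⁻¹β₃`, `τ₂ = β₃⁻¹β₁`,
`τ₃ = β₁⁻¹β₂` of `T°` (composed left to right) satisfy (Q1), (Q2), and (Q3). -/
theorem statement1 {A₁ A₂ A₃ : Type*} [DecidableEq A₁] [DecidableEq A₂] [DecidableEq A₃]
    (T1 T2 : Finset (A₁ × A₂ × A₃)) (hbt : IsBitrade T1 T2)
    (β₁ β₂ β₃ : {x // x ∈ T2} ≃ {x // x ∈ T1})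
    (hβ₁ : ∀ t : {x // x ∈ T2},
      ((β₁ t : A₁ × A₂ × A₃).1 ≠ (t : A₁ × A₂ × A₃).1 ∧
       (β₁ t : A₁ × A₂ × A₃).2.1 = (t : A₁ × A₂ × A₃).2.1 ∧
       (β₁ t : A₁ × A₂ × A₃).2.2 = (t : A₁ × A₂ × A₃).2.2))
    (hβ₂ : ∀ t : {x // x ∈ T2},
      ((β₂ t : A₁ × A₂ × A₃).1 = (t : A₁ × A₂ × A₃).1 ∧
       (β₂ t : A₁ × A₂ × A₃).2.1 ≠ (t : A₁ × A₂ × A₃).2.1 ∧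
       (β₂ t : A₁ × A₂ × A₃).2.2 = (t : A₁ × A₂ × A₃).2.2))
    (hβ₃ : ∀ t : {x // x ∈ T2},
      ((β₃ t : A₁ × A₂ × A₃).1 = (t : A₁ × A₂ × A₃).1 ∧
       (β₃ t : A₁ × A₂ × A₃).2.1 = (t : A₁ × A₂ × A₃).2.1 ∧
       (β₃ t : A₁ × A₂ × A₃).2.2 ≠ (t : A₁ × A₂ × A₃).2.2)) :
    (CyclesMeetPairwise (β₂.symm.trans β₃) (β₃.symm.trans β₁) ∧
     CyclesMeetPairwise (β₂.symm.trans β₃) (β₁.symm.trans β₂) ∧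
     CyclesMeetPairwise (β₃.symm.trans β₁) (β₁.symm.trans β₂)) ∧
    (∀ x : {x // x ∈ T1},
      (β₂.symm.trans β₃) x ≠ x ∧ (β₃.symm.trans β₁) x ≠ x ∧ (β₁.symm.trans β₂) x ≠ x) ∧
    (∀ x : {x // x ∈ T1},
      (β₁.symm.trans β₂) ((β₃.symm.trans β₁) ((β₂.symm.trans β₃) x)) = x) := by
  obtain ⟨-, -, hpls, -⟩ := hbt
  have inv₁ : ∀ x, ((β₂.symm.trans β₃) x).1.1 = x.1.1 := by
    intro x
    obtain ⟨t, rfl⟩ := β₂.surjective x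
    simp [(hβ₂ t).1, (hβ₃ t).1]
  have inv₂ : ∀ x, ((β₃.symm.trans β₁) x).1.2.1 = x.1.2.1 := by
    intro x
    obtain ⟨t, rfl⟩ := β₃.surjective x
    simp [(hβ₃ t).2.1, (hβ₁ t).2.1]
  have inv₃ : ∀ x, ((β₁.symm.trans β₂) x).1.2.2 = x.1.2.2 := by
    intro x
    obtain ⟨t, rfl⟩ := β₁.surjective x
    simp [(hβ₁ t).2.2, (hβ₂ t).2.2]
  refine ⟨⟨?_, ?_, ?_⟩, fun x => ⟨fun h => ?_, fun h => ?_, fun h => ?_⟩, fun x => by simp⟩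
  · exact cyclesMeetPairwise_of_invariants (fun x => x.1.1) (fun x => x.1.2.1) inv₁ inv₂
      fun x y h h' => Subtype.ext ((hpls x x.2 y y.2).1 ⟨h, h'⟩)
  · exact cyclesMeetPairwise_of_invariants (fun x => x.1.1) (fun x => x.1.2.2) inv₁ inv₃
      fun x y h h' => Subtype.ext ((hpls x x.2 y y.2).2.1 ⟨h, h'⟩)
  · exact cyclesMeetPairwise_of_invariants (fun x => x.1.2.1) (fun x => x.1.2.2) inv₂ inv₃
      fun x y h h' => Subtype.ext ((hpls x x.2 y y.2).2.2 ⟨h, h'⟩)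
  · obtain ⟨t, rfl⟩ := β₂.surjective x
    rw [Equiv.trans_apply, Equiv.symm_apply_apply] at h
    exact (hβ₂ t).2.1 (h ▸ (hβ₃ t).2.1)
  · obtain ⟨t, rfl⟩ := β₃.surjective x
    rw [Equiv.trans_apply, Equiv.symm_apply_apply] at h
    exact (hβ₃ t).2.2 (h ▸ (hβ₁ t).2.2)
  · obtain ⟨t, rfl⟩ := β₁.surjective x
    rw [Equiv.trans_apply, Equiv.symm_apply_apply] at h
    exact (hβ₁ t).1 (h ▸ (hβ₂ t).1)
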